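/- Let (X,d) be a compact metric space and f: X → ℝ a Lipschitz function. Then for every x ∈ X the subsolution property of the Hamilton–Jacobi equation holds: (d/dt) Q_t f(x) + (1/2) |D Q_t f|²(x) ≤ 0 for every t ∈ (0,∞) with at most countably many exceptions (at such t the derivative (d/dt) Q_t f(x) exists). -/

import Mathlib

open Filter Topology Set MeasureTheory
open scoped ENNReal NNReal

/-- Hopf-Lax semigroup: `Q_t f (x) = inf_y ( f y + d(x,y)^2 / (2t) )`, with `Q_0 f = f`. -/
noncomputable def HL {X : Type*} [MetricSpace X] (f : X → ℝ) (t : ℝ) (x : X) : ℝ :=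
  if t = 0 then f x else ⨅ y : X, (f y + dist x y ^ 2 / (2 * t))

/-- The set of minimizers of `y ↦ f y + d(x,y)^2/(2t)`. -/
def minSet {X : Type*} [MetricSpace X] (f : X → ℝ) (t : ℝ) (x : X) : Set X :=
  {y | ∀ z : X, f y + dist x y ^ 2 / (2 * t) ≤ f z + dist x z ^ 2 / (2 * t)}

/-- `D⁺(x,t)`: the largest distance from `x` to a minimizer of `y ↦ f y + d(x,y)^2/(2t)`,
with `D⁺(x,0) = 0`. -/
noncomputable def Dplus {X : Type*} [MetricSpace X] (f : X → ℝ) (x : X) (t : ℝ) : ℝ :=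
  if t = 0 then 0 else sSup (dist x '' minSet f t x)

/-- `D⁻(x,t)`: the smallest distance from `x` to a minimizer of `y ↦ f y + d(x,y)^2/(2t)`,
with `D⁻(x,0) = 0`. -/
noncomputable def Dminus {X : Type*} [MetricSpace X] (f : X → ℝ) (x : X) (t : ℝ) : ℝ :=
  if t = 0 then 0 else sInf (dist x '' minSet f t x)

/-- The slope (local Lipschitz constant) of `u` at `x`:
`|Du|(x) = limsup_{y→x} |u y - u x| / d(y,x)` (this `Real`-valued `limsup` is `0` at isolated
points, where the punctured neighborhood filter is trivial). -/
noncomputable def locSlope {X : Type*} [MetricSpace X] (u : X → ℝ) (x : X) : ℝ :=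
  limsup (fun y => |u y - u x| / dist y x) (𝓝[≠] x)

section HopfLax

variable {X : Type*} [MetricSpace X]

lemma minSet_nonempty [CompactSpace X] [Nonempty X] {f : X → ℝ} (hf : Continuous f)
    (t : ℝ) (x : X) : (minSet f t x).Nonempty := by
  have hc : Continuous fun y => f y + dist x y ^ 2 / (2 * t) := by fun_prop
  obtain ⟨y, -, hy⟩ := isCompact_univ.exists_isMinOn univ_nonempty hc.continuousOn
  exact ⟨y, fun z => hy (mem_univ z)⟩

lemma HL_eq_of_mem_minSet [Nonempty X] {f : X → ℝ} {t : ℝ} (ht : t ≠ 0) {x y : X}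
    (hy : y ∈ minSet f t x) : HL f t x = f y + dist x y ^ 2 / (2 * t) := by
  rw [HL, if_neg ht]
  exact le_antisymm (ciInf_le ⟨_, forall_mem_range.2 hy⟩ y) (le_ciInf hy)

lemma HL_le [CompactSpace X] [Nonempty X] {f : X → ℝ} (hf : Continuous f) {t : ℝ} (ht : t ≠ 0)
    (x y : X) : HL f t x ≤ f y + dist x y ^ 2 / (2 * t) := by
  obtain ⟨m, hm⟩ := minSet_nonempty hf t x
  exact (HL_eq_of_mem_minSet ht hm).trans_le (hm y)

/-- If `φ s` is a supergradient of `g` at `s` for every `s`, then `φ` is antitone. -/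
lemma antitone_of_supergradient {g φ : ℝ → ℝ} (h : ∀ s r, g r ≤ g s + (r - s) * φ s) :
    Antitone φ := by
  intro s r hsr
  rcases hsr.eq_or_lt with rfl | hlt
  · exact le_rfl
  · have h₁ := h s r
    have h₂ := h r s
    nlinarith

/-- A function is differentiable at every continuity point of a selection of supergradients. -/
lemma hasDerivAt_of_supergradient {g φ : ℝ → ℝ} (h : ∀ s r, g r ≤ g s + (r - s) * φ s) {s : ℝ}
    (hφ : ContinuousAt φ s) : HasDerivAt g (φ s) s := by
  rw [hasDerivAt_iff_isLittleO, Asymptotics.isLittleO_iff]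
  intro c hc
  filter_upwards [Metric.continuousAt_iff'.1 hφ c hc] with r hr
  rw [Real.dist_eq] at hr
  have h₁ := h s r
  have h₂ := h r s
  have h₃ : |r - s| * |φ r - φ s| ≤ |r - s| * c := by gcongr
  rw [← abs_mul] at h₃
  have h₄ := (abs_le.1 h₃).1
  rw [Real.norm_eq_abs, Real.norm_eq_abs, smul_eq_mul, abs_le]
  constructor <;> nlinarith [mul_nonneg (abs_nonneg (r - s)) hc.le]

/-- Away from countably many times, `t ↦ Q_t f (x)` is differentiable, and its derivative is
determined by the distance from `x` to an arbitrary minimizer. -/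
lemma exists_countable_hasDerivAt_HL [CompactSpace X] [Nonempty X] {f : X → ℝ}
    (hf : Continuous f) (x : X) :
    ∃ E : Set ℝ, E.Countable ∧ ∀ t ∈ Ioi (0 : ℝ), t ∉ E → ∀ y ∈ minSet f t x,
      HasDerivAt (fun τ => HL f τ x) (-(dist x y ^ 2 / (2 * t ^ 2))) t := by
  -- In the variable `s = t⁻¹` the function is an infimum of affine functions.
  have hmin : ∀ s : ℝ, ∃ y, ∀ z, f y + s * (dist x y ^ 2 / 2) ≤ f z + s * (dist x z ^ 2 / 2) := by
    intro s
    have hc : Continuous fun y => f y + s * (dist x y ^ 2 / 2) := by fun_prop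
    obtain ⟨y, -, hy⟩ := isCompact_univ.exists_isMinOn univ_nonempty hc.continuousOn
    exact ⟨y, fun z => hy (mem_univ z)⟩
  choose m hm using hmin
  set φ : ℝ → ℝ := fun s => dist x (m s) ^ 2 / 2 with hφ
  set g : ℝ → ℝ := fun s => f (m s) + s * φ s with hg
  have hsup : ∀ s r, g r ≤ g s + (r - s) * φ s := by
    intro s r
    have := hm r (m s)
    simp only [hg, hφ]
    linarith
  refine ⟨Inv.inv ⁻¹' {s | ¬ ContinuousAt φ s},
    (antitone_of_supergradient hsup).countable_not_continuousAt.preimage inv_injective, ?_⟩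
  intro t ht htE y hy
  have ht0 : t ≠ 0 := (mem_Ioi.1 ht).ne'
  have hcont : ContinuousAt φ t⁻¹ := by simpa using htE
  have hd := hasDerivAt_of_supergradient hsup hcont
  have hdiv : ∀ τ z, dist x z ^ 2 / (2 * τ) = τ⁻¹ * (dist x z ^ 2 / 2) := by
    intro τ z
    rw [div_eq_mul_inv, mul_inv]
    ring
  have hHL : ∀ τ, τ ≠ 0 → HL f τ x = g τ⁻¹ := by
    intro τ hτ
    rw [HL_eq_of_mem_minSet hτ (y := m τ⁻¹) (fun z => by simpa only [hdiv] using hm τ⁻¹ z), hdiv]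
  have hgy : g t⁻¹ = f y + t⁻¹ * (dist x y ^ 2 / 2) := by
    rw [← hHL t ht0, HL_eq_of_mem_minSet ht0 hy, hdiv]
  have hmax : IsLocalMax (fun s => g s - s * (dist x y ^ 2 / 2)) t⁻¹ := by
    refine Eventually.of_forall fun s => ?_
    have := hm s y
    simp only [hgy]
    simp only [hg, hφ]
    linarith
  have hzero := hmax.hasDerivAt_eq_zero
    (hd.sub ((hasDerivAt_id t⁻¹).mul_const (dist x y ^ 2 / 2)))
  have hval : φ t⁻¹ = dist x y ^ 2 / 2 := by linarith
  rw [hval] at hd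
  have hcomp := hd.comp t (hasDerivAt_inv ht0)
  refine (hcomp.congr_of_eventuallyEq ?_).congr_deriv (by field_simp)
  filter_upwards [eventually_ne_nhds ht0] with τ hτ
  exact hHL τ hτ

/-- The distance to the minimizers is upper semicontinuous in the base point. -/
lemma eventually_dist_minSet_lt [CompactSpace X] {f : X → ℝ} (hf : Continuous f) {t : ℝ} {x : X}
    {D : ℝ} (hD : ∀ y ∈ minSet f t x, dist x y < D) :
    ∀ᶠ x' in 𝓝 x, ∀ y ∈ minSet f t x', dist x' y < D := by
  suffices h : ∀ᶠ x' in 𝓝 x, ∀ y ∈ (univ : Set X), y ∈ minSet f t x' → dist x' y < D by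
    simpa using h
  refine isCompact_univ.eventually_forall_of_forall_eventually fun y _ => ?_
  by_cases hy : y ∈ minSet f t x
  · have hc : ContinuousAt (fun p : X × X => dist p.1 p.2) (x, y) := by fun_prop
    filter_upwards [hc.eventually_lt_const (hD y hy)] with p hp _ using hp
  · simp only [minSet, mem_ofPred_eq, not_forall, not_le] at hy
    obtain ⟨z, hz⟩ := hy
    have h₁ : ContinuousAt (fun p : X × X => f z + dist p.1 z ^ 2 / (2 * t)) (x, y) := by fun_prop
    have h₂ : ContinuousAt (fun p : X × X => f p.2 + dist p.1 p.2 ^ 2 / (2 * t)) (x, y) := by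
      fun_prop
    filter_upwards [h₁.eventually_lt h₂ hz] with p hp hmem
    exact absurd (hmem z) (not_le.2 hp)

lemma HL_sub_le [CompactSpace X] [Nonempty X] {f : X → ℝ} (hf : Continuous f) {t : ℝ}
    (ht : 0 < t) {x x' y : X} (hy : y ∈ minSet f t x') :
    HL f t x - HL f t x' ≤ dist x' x * ((dist x' y + dist x' x / 2) / t) := by
  have h₁ := HL_le hf ht.ne' x y
  rw [HL_eq_of_mem_minSet ht.ne' hy]
  have h₂ : dist x y ^ 2 ≤ (dist x' x + dist x' y) ^ 2 := by
    have := dist_triangle_left x y x'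
    gcongr
  have h₃ : dist x y ^ 2 / (2 * t) ≤ (dist x' x + dist x' y) ^ 2 / (2 * t) := by gcongr
  have h₄ : (dist x' x + dist x' y) ^ 2 / (2 * t) =
      dist x' y ^ 2 / (2 * t) + dist x' x * ((dist x' y + dist x' x / 2) / t) := by
    field_simp
    ring
  linarith

lemma locSlope_mem_Icc {u : X → ℝ} {x : X} {C : ℝ} (hC : 0 ≤ C)
    (h : ∀ᶠ y in 𝓝[≠] x, |u y - u x| / dist y x ≤ C) : locSlope u x ∈ Icc 0 C := by
  rcases eq_or_neBot (𝓝[≠] x) with hbot | hne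
  · simp [locSlope, hbot, limsup_eq, hC]
  · have h0 : ∀ y, 0 ≤ |u y - u x| / dist y x := fun y => by positivity
    exact ⟨le_limsup_of_frequently_le (Frequently.of_forall h0) ⟨C, h⟩,
      limsup_le_of_le ⟨0, fun a ha => by
        obtain ⟨y, hy⟩ := (eventually_map.1 ha).exists
        exact (h0 y).trans hy⟩ h⟩

/-- The slope of `Q_t f` at `x` is at most `D / t` if all minimizers lie within distance `D`. -/
lemma locSlope_HL_mem_Icc [CompactSpace X] [Nonempty X] {f : X → ℝ} (hf : Continuous f) {t : ℝ}
    (ht : 0 < t) {x : X} {D : ℝ} (hD : ∀ y ∈ minSet f t x, dist x y ≤ D) :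
    locSlope (HL f t) x ∈ Icc 0 (D / t) := by
  obtain ⟨m, hm⟩ := minSet_nonempty hf t x
  have hD0 : 0 ≤ D := dist_nonneg.trans (hD m hm)
  have key : ∀ ε > 0, locSlope (HL f t) x ∈ Icc 0 ((D + ε) / t) := by
    intro ε hε
    refine locSlope_mem_Icc (by positivity) ?_
    have h₁ := eventually_dist_minSet_lt hf (D := D + ε / 2)
      fun y hy => (hD y hy).trans_lt (by linarith)
    filter_upwards [nhdsWithin_le_nhds h₁, nhdsWithin_le_nhds (Metric.ball_mem_nhds x hε),
      self_mem_nhdsWithin] with x' hx' hball hne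
    rw [Metric.mem_ball] at hball
    obtain ⟨m', hm'⟩ := minSet_nonempty hf t x'
    rw [div_le_iff₀ (dist_pos.2 hne), abs_sub_le_iff, mul_comm]
    constructor
    · refine (HL_sub_le hf ht hm).trans ?_
      rw [dist_comm x x']
      have := hD m hm
      gcongr
      linarith
    · refine (HL_sub_le hf ht hm').trans ?_
      have := hx' m' hm'
      have hle : dist x' m' + dist x' x / 2 ≤ D + ε := by linarith
      gcongr
  refine ⟨(key 1 one_pos).1, ?_⟩
  rw [le_div_iff₀ ht]
  refine le_of_forall_pos_le_add fun ε hε => ?_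
  rw [← le_div_iff₀ ht]
  exact (key ε hε).2

end HopfLax

/-- **Subsolution of the Hamilton–Jacobi equation** (Theorem 3.5): for a Lipschitz `f` on a
compact metric space and every `x ∈ X`, for all `t ∈ (0,∞)` with at most countably many
exceptions the derivative `(d/dt) Q_t f (x)` exists and
`(d/dt) Q_t f (x) + ½ |D Q_t f|²(x) ≤ 0`. -/
theorem stmt4 {X : Type*} [MetricSpace X] [CompactSpace X] [Nonempty X]
    (f : X → ℝ) (hf : ∃ K : ℝ≥0, LipschitzWith K f) :
    ∀ x : X, ∃ E : Set ℝ, E.Countable ∧ ∀ t ∈ Ioi (0 : ℝ), t ∉ E →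
      ∃ d : ℝ, HasDerivAt (fun τ : ℝ => HL f τ x) d t ∧
        d + (1 / 2) * (locSlope (HL f t) x) ^ 2 ≤ 0 := by
  intro x
  obtain ⟨K, hK⟩ := hf
  have hc := hK.continuous
  obtain ⟨E, hE, hderiv⟩ := exists_countable_hasDerivAt_HL hc x
  refine ⟨E, hE, fun t ht htE => ?_⟩
  have ht0 : 0 < t := ht
  obtain ⟨m, hm⟩ := minSet_nonempty hc t x
  have hdm := hderiv t ht htE m hm
  refine ⟨_, hdm, ?_⟩
  have hD : ∀ y ∈ minSet f t x, dist x y ≤ dist x m := by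
    intro y hy
    have h := neg_injective ((hderiv t ht htE y hy).unique hdm)
    rw [div_left_inj' (by positivity)] at h
    exact ((sq_eq_sq₀ dist_nonneg dist_nonneg).1 h).le
  obtain ⟨h0, h1⟩ := locSlope_HL_mem_Icc hc ht0 hD
  have hsq : locSlope (HL f t) x ^ 2 ≤ (dist x m / t) ^ 2 := by gcongr
  have heq : dist x m ^ 2 / (2 * t ^ 2) = 1 / 2 * (dist x m / t) ^ 2 := by
    field_simp
  linarith
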